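/- The infinite series identity 24·log(2) = Σ_{j=0}^{∞} (-1/27)^j · [(1/2)_j (1)_j] / [(4/3)_j (5/3)_j] · (28j + 17) holds, where log denotes the natural logarithm, the sum is over natural numbers j, and all quantities are real numbers. -/

import Mathlib

noncomputable def risingFactorial (a : ℝ) (k : ℕ) : ℝ := ∏ i ∈ Finset.range k, (a + i)

/-!
By the multiplication formula for rising factorials and Euler's Beta integral, the `k`-th term of
the series is `∫₀¹ (12 (1 - x) + 22 x) (-x² (1 - x) / 4) ^ k dx`. Summing the geometric series under
the integral leaves a rational function with denominator `4 + x² - x³ = (2 - x) (x² + x + 2)`. Its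
numerator is such that the partial fraction over `x² + x + 2` is a multiple of the logarithmic
derivative, so no arctangent appears and the integral is a combination of logarithms of powers
of `2`.
-/

open Nat intervalIntegral
open MeasureTheory (Measure ae_of_all volume)
open Finset (range prod_range_succ prod_range_add prod_pos prod_congr)

theorem risingFactorial_pos {a : ℝ} (ha : 0 < a) (k : ℕ) : 0 < risingFactorial a k :=
  prod_pos fun _ _ ↦ by positivity

theorem risingFactorial_succ (a : ℝ) (k : ℕ) :
    risingFactorial a (k + 1) = risingFactorial a k * (a + k) :=
  prod_range_succ _ _

theorem factorial_mul_risingFactorial (n k : ℕ) :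
    n ! * risingFactorial (n + 1) k = (n + k)! := by
  induction k with
  | zero => simp [risingFactorial]
  | succ k ih =>
    rw [risingFactorial_succ, ← mul_assoc, ih, ← add_assoc, factorial_succ]
    push_cast
    ring

theorem risingFactorial_one (k : ℕ) : risingFactorial 1 k = k ! := by
  simpa using factorial_mul_risingFactorial 0 k

theorem risingFactorial_mul (a : ℝ) (m k : ℕ) :
    risingFactorial a (m * k) = m ^ (m * k) * ∏ i ∈ range m, risingFactorial ((a + i) / m) k := by
  obtain rfl | hm := eq_or_ne m 0
  · simp [risingFactorial]
  induction k with
  | zero => simp [risingFactorial]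
  | succ k ih =>
    have block : ∏ i ∈ range m, (a + (m * k + i : ℕ)) =
        m ^ m * ∏ i ∈ range m, ((a + i) / m + k) := by
      conv_rhs => enter [1, 2]; rw [← Finset.card_range m]
      rw [Finset.pow_card_mul_prod]
      refine prod_congr rfl fun i _ ↦ ?_
      push_cast
      field_simp
      ring
    calc risingFactorial a (m * (k + 1))
      _ = risingFactorial a (m * k) * ∏ i ∈ range m, (a + (m * k + i : ℕ)) :=
        prod_range_add _ _ _
      _ = m ^ (m * (k + 1)) * ∏ i ∈ range m, risingFactorial ((a + i) / m) (k + 1) := by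
        simp only [ih, block, risingFactorial_succ, Finset.prod_mul_distrib]
        ring

theorem factorial_two_mul (k : ℕ) :
    ((2 * k)! : ℝ) = 4 ^ k * (risingFactorial (1 / 2) k * risingFactorial 1 k) := by
  rw [← risingFactorial_one, risingFactorial_mul, pow_mul]
  norm_num [prod_range_succ]

theorem factorial_three_mul_add_two (k : ℕ) :
    ((3 * k + 2)! : ℝ) =
      2 * 27 ^ k * (k ! * (risingFactorial (4 / 3) k * risingFactorial (5 / 3) k)) := by
  rw [add_comm, ← factorial_mul_risingFactorial, risingFactorial_mul, pow_mul]
  norm_num [prod_range_succ, risingFactorial_one]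
  ring

theorem risingFactorial_div_eq_factorial_div (k : ℕ) :
    (-1 / 27 : ℝ) ^ k * (risingFactorial (1 / 2) k * risingFactorial 1 k) /
        (risingFactorial (4 / 3) k * risingFactorial (5 / 3) k) =
      (-1 / 4) ^ k * (2 * ((2 * k)! * k ! / (3 * k + 2)!)) := by
  have h₄ := (risingFactorial_pos (a := 4 / 3) (by norm_num) k).ne'
  have h₅ := (risingFactorial_pos (a := 5 / 3) (by norm_num) k).ne'
  rw [factorial_two_mul, factorial_three_mul_add_two, div_pow, div_pow]
  field_simp

theorem integral_pow_mul_one_sub_pow (m n : ℕ) :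
    ∫ x in (0 : ℝ)..1, x ^ m * (1 - x) ^ n = m ! * n ! / (m + n + 1)! := by
  have beta : Complex.betaIntegral (m + 1) (n + 1) =
      (∫ x in (0 : ℝ)..1, x ^ m * (1 - x) ^ n : ℝ) := by
    simp [Complex.betaIntegral, ← intervalIntegral.integral_ofReal]
  have gamma : (m ! * n ! : ℂ) = (m + n + 1)! * Complex.betaIntegral (m + 1) (n + 1) := by
    have h := Complex.Gamma_mul_Gamma_eq_betaIntegral (s := m + 1) (t := n + 1)
      (by simpa using m.cast_add_one_pos) (by simpa using n.cast_add_one_pos)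
    rw [← Complex.Gamma_nat_eq_factorial, ← Complex.Gamma_nat_eq_factorial, h,
      ← Complex.Gamma_nat_eq_factorial]
    push_cast
    ring_nf
  rw [beta] at gamma
  rw [eq_div_iff (by positivity), mul_comm]
  exact_mod_cast gamma.symm

theorem integral_linear_mul_pow_mul_one_sub_pow (a b : ℝ) (m n : ℕ) :
    ∫ x in (0 : ℝ)..1, (a * (1 - x) + b * x) * (x ^ m * (1 - x) ^ n) =
      m ! * n ! / (m + n + 2)! * (a * (n + 1) + b * (m + 1)) := by
  calc ∫ x in (0 : ℝ)..1, (a * (1 - x) + b * x) * (x ^ m * (1 - x) ^ n)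
    _ = ∫ x in (0 : ℝ)..1,
        (a * (x ^ m * (1 - x) ^ (n + 1)) + b * (x ^ (m + 1) * (1 - x) ^ n)) := by
      congr with x
      ring
    _ = a * (m ! * (n + 1)! / (m + n + 2)!) + b * ((m + 1)! * n ! / (m + n + 2)!) := by
      rw [integral_add (Continuous.intervalIntegrable (by fun_prop) _ _)
        (Continuous.intervalIntegrable (by fun_prop) _ _), integral_const_mul, integral_const_mul,
        integral_pow_mul_one_sub_pow, integral_pow_mul_one_sub_pow,
        show m + 1 + n + 1 = m + n + 2 by ring, ← add_assoc m n 1]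
    _ = m ! * n ! / (m + n + 2)! * (a * (n + 1) + b * (m + 1)) := by
      rw [factorial_succ m, factorial_succ n]
      push_cast
      ring

theorem hasSum_intervalIntegral_mul_pow {𝕜 : Type*} [NormedField 𝕜] [NormedSpace ℝ 𝕜]
    {μ : Measure ℝ} {a b : ℝ} {f g : ℝ → 𝕜} (hf : IntervalIntegrable f μ a b)
    (hg : ContinuousOn g (Set.uIcc a b)) (hg_lt : ∀ x ∈ Set.uIcc a b, ‖g x‖ < 1) :
    HasSum (fun n : ℕ ↦ ∫ x in a..b, f x * g x ^ n ∂μ) (∫ x in a..b, f x * (1 - g x)⁻¹ ∂μ) := by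
  obtain ⟨x₀, hx₀, hmax⟩ := isCompact_uIcc.exists_isMaxOn Set.nonempty_uIcc hg.norm
  have summable_bound : Summable fun n : ℕ ↦ ‖g x₀‖ ^ n :=
    summable_geometric_of_lt_one (norm_nonneg _) (hg_lt x₀ hx₀)
  refine hasSum_integral_of_dominated_convergence (fun n x ↦ ‖f x‖ * ‖g x₀‖ ^ n)
    (fun n ↦ ?_) (fun n ↦ ?_) ?_ ?_ ?_
  · exact hf.def'.aestronglyMeasurable.mul
      (((hg.mono Set.uIoc_subset_uIcc).pow n).aestronglyMeasurable measurableSet_uIoc)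
  · refine ae_of_all _ fun x hx ↦ ?_
    rw [norm_mul, norm_pow]
    gcongr
    exact hmax (Set.uIoc_subset_uIcc hx)
  · exact ae_of_all _ fun x _ ↦ summable_bound.mul_left _
  · simpa only [tsum_mul_left] using hf.norm.mul_const _
  · exact ae_of_all _ fun x hx ↦
      (hasSum_geometric_of_norm_lt_one (hg_lt x (Set.uIoc_subset_uIcc hx))).mul_left _

theorem sq_add_self_add_two_pos (x : ℝ) : 0 < x ^ 2 + x + 2 := by
  nlinarith [sq_nonneg (x + 1)]

theorem linear_mul_inv_eq_partial_fractions {x : ℝ} (hx : 2 - x ≠ 0) :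
    (12 * (1 - x) + 22 * x) * (1 - -1 / 4 * (x ^ 2 * (1 - x)))⁻¹ =
      8 * ((2 * x + 1) / (x ^ 2 + x + 2)) - 16 * (-1 / (2 - x)) := by
  have quadratic_ne := (sq_add_self_add_two_pos x).ne'
  rw [show 1 - -1 / 4 * (x ^ 2 * (1 - x)) = (2 - x) * (x ^ 2 + x + 2) / 4 by ring]
  grind

theorem hasDerivAt_log_quadratic_sub_log_linear {x : ℝ} (hx : 2 - x ≠ 0) :
    HasDerivAt (fun x ↦ 8 * Real.log (x ^ 2 + x + 2) - 16 * Real.log (2 - x))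
      (8 * ((2 * x + 1) / (x ^ 2 + x + 2)) - 16 * (-1 / (2 - x))) x := by
  have quadratic : HasDerivAt (fun x : ℝ ↦ x ^ 2 + x + 2) (2 * x + 1) x := by
    simpa using ((hasDerivAt_pow 2 x).add (hasDerivAt_id x)).add_const 2
  have linear : HasDerivAt (fun x : ℝ ↦ 2 - x) (-1) x := (hasDerivAt_id x).const_sub 2
  exact ((quadratic.log (sq_add_self_add_two_pos x).ne').const_mul 8).sub
    ((linear.log hx).const_mul 16)

theorem integral_linear_mul_inv_eq_log_two :
    ∫ x in (0 : ℝ)..1, (12 * (1 - x) + 22 * x) * (1 - -1 / 4 * (x ^ 2 * (1 - x)))⁻¹ =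
      24 * Real.log 2 := by
  have linear_ne : ∀ x ∈ Set.uIcc (0 : ℝ) 1, 2 - x ≠ 0 := fun x hx ↦ by
    rw [Set.uIcc_of_le zero_le_one] at hx
    linarith [hx.2]
  have quadratic_ne : ∀ x ∈ Set.uIcc (0 : ℝ) 1, x ^ 2 + x + 2 ≠ 0 := fun x _ ↦
    (sq_add_self_add_two_pos x).ne'
  have log_four : Real.log 4 = 2 * Real.log 2 := by
    rw [show (4 : ℝ) = 2 ^ 2 by norm_num, Real.log_pow, Nat.cast_ofNat]
  rw [integral_congr fun x hx ↦ linear_mul_inv_eq_partial_fractions (linear_ne x hx),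
    integral_eq_sub_of_hasDerivAt
      fun x hx ↦ hasDerivAt_log_quadratic_sub_log_linear (linear_ne x hx)]
  · norm_num [log_four]
    ring
  · exact ContinuousOn.intervalIntegrable (by fun_prop (disch := assumption))

theorem abs_pow_mul_one_sub_pow_le_one {x : ℝ} (hx : x ∈ Set.Icc 0 1) (m n : ℕ) :
    |x ^ m * (1 - x) ^ n| ≤ 1 := by
  have h : 0 ≤ 1 - x := sub_nonneg.2 hx.2
  rw [abs_of_nonneg (mul_nonneg (pow_nonneg hx.1 m) (pow_nonneg h n))]
  exact mul_le_one₀ (pow_le_one₀ hx.1 hx.2) (pow_nonneg h n) (pow_le_one₀ h (sub_le_self 1 hx.1))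

-- The weights `12` and `22` solve `p (k + 1) + q (2 k + 1) = 2 (28 k + 17)`.
theorem integral_linear_mul_pow_eq_term (k : ℕ) :
    ∫ x in (0 : ℝ)..1, (12 * (1 - x) + 22 * x) * (-1 / 4 * (x ^ 2 * (1 - x))) ^ k =
      (-1 / 27 : ℝ) ^ k * (risingFactorial (1 / 2) k * risingFactorial 1 k) /
        (risingFactorial (4 / 3) k * risingFactorial (5 / 3) k) * (28 * (k : ℝ) + 17) := by
  calc ∫ x in (0 : ℝ)..1, (12 * (1 - x) + 22 * x) * (-1 / 4 * (x ^ 2 * (1 - x))) ^ k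
    _ = (-1 / 4) ^ k *
        ∫ x in (0 : ℝ)..1, (12 * (1 - x) + 22 * x) * (x ^ (2 * k) * (1 - x) ^ k) := by
      rw [← integral_const_mul]
      congr with x
      rw [mul_pow, mul_pow, ← pow_mul]
      ring
    _ = (-1 / 4) ^ k * (2 * ((2 * k)! * k ! / (3 * k + 2)!)) * (28 * k + 17) := by
      rw [integral_linear_mul_pow_mul_one_sub_pow, show 2 * k + k + 2 = 3 * k + 2 by ring]
      push_cast
      ring
    _ = _ := by rw [risingFactorial_div_eq_factorial_div]

theorem stmt_19 :
    24 * Real.log 2 =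
      ∑' k : ℕ, (-1/27 : ℝ) ^ k * (risingFactorial (1/2) k * risingFactorial (1) k) /
        (risingFactorial (4/3) k * risingFactorial (5/3) k) * (28 * (k:ℝ) + 17) := by
  have ratio_lt_one : ∀ x ∈ Set.uIcc (0 : ℝ) 1, ‖-1 / 4 * (x ^ 2 * (1 - x))‖ < 1 := fun x hx ↦ by
    rw [Set.uIcc_of_le zero_le_one] at hx
    calc ‖-1 / 4 * (x ^ 2 * (1 - x))‖
      _ = 1 / 4 * |x ^ 2 * (1 - x) ^ 1| := by
        rw [norm_mul, pow_one, Real.norm_eq_abs (x ^ 2 * (1 - x))]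
        norm_num only [Real.norm_eq_abs, abs_div, abs_neg]
      _ < 1 := by linarith [abs_pow_mul_one_sub_pow_le_one hx 2 1]
  have series := hasSum_intervalIntegral_mul_pow (μ := volume)
    (f := fun x ↦ 12 * (1 - x) + 22 * x) (Continuous.intervalIntegrable (by fun_prop) 0 1)
    (by fun_prop) ratio_lt_one
  simp only [integral_linear_mul_pow_eq_term, integral_linear_mul_inv_eq_log_two] at series
  exact series.tsum_eq.symm
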